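/- Let A ∈ ℂ^{n×n}, let λ̂ ∈ ℂ be an eigenvalue of A, and let m, k be positive integers such that dim ker(A − λ̂ I) = m and dim ker((A − λ̂ I)^k) = k·m. Let S ∈ ℂ^{k×k} be strictly upper triangular with all superdiagonal entries nonzero, and let T : ℂ^{n×k} → ℂ^{n×k} be the linear map T(X) = A X − λ̂ X − X S. Suppose X̂ ∈ ℂ^{n×k} satisfies T(X̂) = 0 and X̂ ∉ range(T). Then the ℂ-linear map J : ℂ × ℂ^{n×k} → ℂ^{n×k} defined by J(μ, X) = A X − λ̂ X − X S − μ X̂ has kernel {0} × ker(T), hence nullity m·k and rank 1 + (n − m)·k. -/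

import Mathlib

/-!
Put `B = A - λ̂ I`, so that `T X = B X - X S`. Since `S` is strictly upper triangular with nonzero
superdiagonal, it is nilpotent and the last basis vector `e` is cyclic for it: the vectors
`e, S e, …, S^(k-1) e` form a basis of `ℂ^k` (`krylov_det_ne_zero`). A matrix `X` with
`B X = X S` satisfies `X S^j e = B^j (X e)`, so it is determined by its last column `X e`, which
lies in `ker (B^k)`; conversely every `v ∈ ker (B^k)` arises as such a last column, by prescribing
`S^j e ↦ B^j v`. Hence `ker T ≃ ker (B^k)` has dimension `k * m` (`finrank_intertwiners`).

Because `X̂ ∉ range T`, the equation `T X = μ X̂` forces `μ = 0`, which gives `ker J = {0} × ker T`.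
The rank then follows from the rank-nullity theorem.
-/

open Matrix

/-- The `p × k` matrix with columns `M^(k-1) v, …, M v, v`, in this order. Listing the powers in
decreasing order makes it upper triangular when `M = S` and `v` is the last basis vector. -/
noncomputable def krylov {p : ℕ} (k : ℕ) (M : Matrix (Fin p) (Fin p) ℂ) (v : Fin p → ℂ) :
    Matrix (Fin p) (Fin k) ℂ :=
  Matrix.of fun i c => ((M ^ (k - 1 - (c : ℕ))) *ᵥ v) i

/-- The nilpotent shift matrix, with ones on the superdiagonal and zeros elsewhere. -/
def shiftMatrix (k : ℕ) : Matrix (Fin k) (Fin k) ℂ :=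
  Matrix.of fun r c => if (r : ℕ) + 1 = (c : ℕ) then 1 else 0

lemma mul_krylov {p k : ℕ} (M : Matrix (Fin p) (Fin p) ℂ) (v : Fin p → ℂ)
    (h : (M ^ k) *ᵥ v = 0) : M * krylov k M v = krylov k M v * shiftMatrix k := by
  ext i c
  have h1 : (M * krylov k M v) i c = ((M ^ (k - (c : ℕ))) *ᵥ v) i := by
    have : k - (c : ℕ) = (k - 1 - (c : ℕ)) + 1 := by have := c.isLt; omega
    rw [this, pow_succ', ← mulVec_mulVec]
    rfl
  rw [h1, mul_apply]
  rcases Nat.eq_zero_or_pos (c : ℕ) with hc | hc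
  · rw [hc, Nat.sub_zero, h, Finset.sum_eq_zero]
    · rfl
    · intro r _
      have : ¬ ((r : ℕ) + 1 = (c : ℕ)) := by omega
      simp [shiftMatrix, this]
  · have hlt := c.isLt
    rw [Finset.sum_eq_single (⟨(c : ℕ) - 1, by omega⟩ : Fin k)]
    · have e1 : (c : ℕ) - 1 + 1 = (c : ℕ) := by omega
      have e2 : k - 1 - ((c : ℕ) - 1) = k - (c : ℕ) := by omega
      simp [shiftMatrix, krylov, e1, e2]
    · intro r _ hr
      have : ¬ ((r : ℕ) + 1 = (c : ℕ)) := fun h => hr (Fin.ext (by simp; omega))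
      simp [shiftMatrix, this]
    · simp

section Nilpotent

variable {k : ℕ} {S : Matrix (Fin k) (Fin k) ℂ}

lemma pow_apply_eq_zero (hS1 : ∀ i j : Fin k, (j : ℕ) ≤ (i : ℕ) → S i j = 0) (q : ℕ) :
    ∀ i c : Fin k, (c : ℕ) < (i : ℕ) + q → (S ^ q) i c = 0 := by
  induction q with
  | zero =>
    intro i c h
    rw [pow_zero, one_apply_ne]
    rintro rfl
    omega
  | succ q ih =>
    intro i c h
    rw [pow_succ', mul_apply]
    refine Finset.sum_eq_zero fun l _ => ?_
    rcases le_or_gt (l : ℕ) (i : ℕ) with hl | hl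
    · rw [hS1 i l hl, zero_mul]
    · rw [ih l c (by omega), mul_zero]

lemma pow_apply_ne_zero (hS1 : ∀ i j : Fin k, (j : ℕ) ≤ (i : ℕ) → S i j = 0)
    (hS2 : ∀ i j : Fin k, (j : ℕ) = (i : ℕ) + 1 → S i j ≠ 0) (q : ℕ) :
    ∀ i c : Fin k, (c : ℕ) = (i : ℕ) + q → (S ^ q) i c ≠ 0 := by
  induction q with
  | zero =>
    intro i c h
    have : i = c := Fin.ext (by omega)
    simp [this]
  | succ q ih =>
    intro i c h
    have hc := c.isLt
    -- only the index `l = i + 1` contributes to the entry of `S * S ^ q`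
    rw [pow_succ', mul_apply, Finset.sum_eq_single (⟨(i : ℕ) + 1, by omega⟩ : Fin k)]
    · exact mul_ne_zero (hS2 _ _ rfl) (ih _ _ (by simp; omega))
    · intro l _ hl
      rcases le_or_gt (l : ℕ) (i : ℕ) with h' | h'
      · rw [hS1 i l h', zero_mul]
      · have : (l : ℕ) ≠ (i : ℕ) + 1 := fun h => hl (Fin.ext h)
        rw [pow_apply_eq_zero hS1 q l c (by omega), mul_zero]
    · simp

lemma pow_eq_zero_of_strictUpper (hS1 : ∀ i j : Fin k, (j : ℕ) ≤ (i : ℕ) → S i j = 0) :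
    S ^ k = 0 := by
  ext i c
  exact pow_apply_eq_zero hS1 k i c (by have := c.isLt; omega)

/-- The last basis vector is cyclic for `S`: the matrix of its iterates is upper triangular with
nonzero diagonal. -/
lemma krylov_det_ne_zero (hS1 : ∀ i j : Fin k, (j : ℕ) ≤ (i : ℕ) → S i j = 0)
    (hS2 : ∀ i j : Fin k, (j : ℕ) = (i : ℕ) + 1 → S i j ≠ 0) (l : Fin k)
    (hl : (l : ℕ) + 1 = k) : (krylov k S (Pi.single l 1)).det ≠ 0 := by
  have key : ∀ i c, krylov k S (Pi.single l 1) i c = (S ^ (k - 1 - (c : ℕ))) i l := by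
    intro i c
    simp [krylov]
  rw [det_of_isUpperTriangular]
  · refine Finset.prod_ne_zero_iff.2 fun i _ => ?_
    rw [key]
    exact pow_apply_ne_zero hS1 hS2 _ _ _ (by have := i.isLt; omega)
  · intro i c h
    have h' : (c : ℕ) < (i : ℕ) := h
    rw [key]
    exact pow_apply_eq_zero hS1 _ _ _ (by have := i.isLt; omega)

lemma pow_mul_of_intertwines {n : ℕ} {B : Matrix (Fin n) (Fin n) ℂ}
    {X : Matrix (Fin n) (Fin k) ℂ} (h : B * X = X * S) (q : ℕ) : B ^ q * X = X * S ^ q := by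
  induction q with
  | zero => simp
  | succ q ih => rw [pow_succ, Matrix.mul_assoc, h, ← Matrix.mul_assoc, ih, Matrix.mul_assoc,
      pow_succ]

lemma mul_krylov_of_intertwines {n : ℕ} {B : Matrix (Fin n) (Fin n) ℂ}
    {X : Matrix (Fin n) (Fin k) ℂ} (h : B * X = X * S) (v : Fin k → ℂ) :
    X * krylov k S v = krylov k B (X *ᵥ v) := by
  ext i c
  have : (X * krylov k S v) i c = (X *ᵥ ((S ^ (k - 1 - (c : ℕ))) *ᵥ v)) i := rfl
  rw [this, mulVec_mulVec, ← pow_mul_of_intertwines h, ← mulVec_mulVec]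
  rfl

/-- Taking the last column identifies the solutions of `B X = X S` with `ker (B ^ k)`. -/
lemma finrank_intertwiners {n : ℕ} (hk : 0 < k) (B : Matrix (Fin n) (Fin n) ℂ)
    (hS1 : ∀ i j : Fin k, (j : ℕ) ≤ (i : ℕ) → S i j = 0)
    (hS2 : ∀ i j : Fin k, (j : ℕ) = (i : ℕ) + 1 → S i j ≠ 0)
    (K : Submodule ℂ (Matrix (Fin n) (Fin k) ℂ)) (hK : ∀ X, X ∈ K ↔ B * X = X * S) :
    Module.finrank ℂ K = Module.finrank ℂ (LinearMap.ker (Matrix.mulVecLin (B ^ k))) := by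
  obtain ⟨l, hl⟩ : ∃ l : Fin k, (l : ℕ) + 1 = k := ⟨⟨k - 1, by omega⟩, by simp; omega⟩
  set e : Fin k → ℂ := Pi.single l 1 with he
  set P := krylov k S e with hP
  have hdet : IsUnit P.det := (krylov_det_ne_zero hS1 hS2 l hl).isUnit
  have hSk := pow_eq_zero_of_strictUpper hS1
  let Φ : Matrix (Fin n) (Fin k) ℂ →ₗ[ℂ] (Fin n → ℂ) :=
    { toFun := fun X => X *ᵥ e
      map_add' := fun X Y => add_mulVec X Y e
      map_smul' := fun a X => smul_mulVec a X e }
  have hinj : Function.Injective (Φ.domRestrict K) := by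
    rw [← LinearMap.ker_eq_bot, LinearMap.ker_eq_bot']
    rintro ⟨X, hX⟩ h0
    have h0' : X *ᵥ e = 0 := h0
    have hXP : X * P = 0 := by
      rw [hP, mul_krylov_of_intertwines ((hK X).1 hX), h0']
      ext i c
      simp [krylov]
    have : X = 0 := by
      rw [← mul_nonsing_inv_cancel_right P X hdet, hXP, Matrix.zero_mul]
    exact Subtype.ext this
  have hrange : LinearMap.range (Φ.domRestrict K) = LinearMap.ker (Matrix.mulVecLin (B ^ k)) := by
    apply le_antisymm
    · rintro _ ⟨⟨X, hX⟩, rfl⟩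
      change (B ^ k) *ᵥ (X *ᵥ e) = 0
      rw [mulVec_mulVec, pow_mul_of_intertwines ((hK X).1 hX), hSk, Matrix.mul_zero, zero_mulVec]
    · intro v hv
      have hv' : (B ^ k) *ᵥ v = 0 := hv
      have hSP : S * P = P * shiftMatrix k := mul_krylov S e (by rw [hSk, zero_mulVec])
      have hBW := mul_krylov B v hv'
      -- both Krylov matrices turn multiplication into the same shift, so `W * P⁻¹` intertwines
      have hPS : P⁻¹ * S = shiftMatrix k * P⁻¹ := by
        rw [← mul_nonsing_inv_cancel_right P (P⁻¹ * S) hdet, Matrix.mul_assoc P⁻¹ S P, hSP,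
          nonsing_inv_mul_cancel_left P _ hdet]
      refine ⟨⟨krylov k B v * P⁻¹, (hK _).2 ?_⟩, ?_⟩
      · rw [← Matrix.mul_assoc, hBW, Matrix.mul_assoc, ← hPS, Matrix.mul_assoc]
      · change (krylov k B v * P⁻¹) *ᵥ e = v
        have hk0 : k - 1 - (l : ℕ) = 0 := by omega
        have hPe : P *ᵥ e = e := by
          ext i
          simp [he, hP, krylov, hk0, one_apply, Pi.single_apply]
        have hWe : krylov k B v *ᵥ e = v := by
          ext i
          simp [he, krylov, hk0]
        have hinv : P⁻¹ *ᵥ e = e := by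
          conv_lhs => rw [← hPe]
          rw [mulVec_mulVec, nonsing_inv_mul P hdet, one_mulVec]
        rw [← mulVec_mulVec, hinv, hWe]
  rw [← LinearMap.finrank_range_of_inj hinj, hrange]

end Nilpotent


/-- Rank formula in the semiregularity of defective eigenvalues: with
`T(X) = A X - λ̂ X - X S` and a solution `X̂` with `T(X̂) = 0`, `X̂ ∉ range T`, the
Jacobian `J(μ, X) = A X - λ̂ X - X S - μ X̂` has kernel `{0} × ker T`, hence nullity
`m·k` and rank `1 + (n - m)·k`. -/
theorem stmt_11 {n k : ℕ} (A : Matrix (Fin n) (Fin n) ℂ) (lam : ℂ)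
    (m : ℕ) (hm : 0 < m) (hk : 0 < k)
    (hgeo : Module.finrank ℂ (LinearMap.ker (Matrix.mulVecLin (A - lam • 1))) = m)
    (hpow : Module.finrank ℂ (LinearMap.ker (Matrix.mulVecLin ((A - lam • 1) ^ k))) = k * m)
    (S : Matrix (Fin k) (Fin k) ℂ)
    (hS1 : ∀ i j : Fin k, (j : ℕ) ≤ (i : ℕ) → S i j = 0)
    (hS2 : ∀ i j : Fin k, (j : ℕ) = (i : ℕ) + 1 → S i j ≠ 0)
    (T : Matrix (Fin n) (Fin k) ℂ →ₗ[ℂ] Matrix (Fin n) (Fin k) ℂ)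
    (hT : ∀ X, T X = A * X - lam • X - X * S)
    (Xhat : Matrix (Fin n) (Fin k) ℂ)
    (hXhat : T Xhat = 0) (hXhat' : Xhat ∉ LinearMap.range T)
    (J : (ℂ × Matrix (Fin n) (Fin k) ℂ) →ₗ[ℂ] Matrix (Fin n) (Fin k) ℂ)
    (hJ : ∀ (μ : ℂ) (X : Matrix (Fin n) (Fin k) ℂ),
      J (μ, X) = A * X - lam • X - X * S - μ • Xhat) :
    LinearMap.ker J = Submodule.prod ⊥ (LinearMap.ker T) ∧
    Module.finrank ℂ (LinearMap.ker J) = m * k ∧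
    Module.finrank ℂ (LinearMap.range J) = 1 + (n - m) * k := by
  have hkerT : Module.finrank ℂ (LinearMap.ker T) = m * k := by
    rw [mul_comm m k, ← hpow]
    refine finrank_intertwiners hk (A - lam • 1) hS1 hS2 _ fun X => ?_
    rw [LinearMap.mem_ker, hT, sub_eq_zero, Matrix.sub_mul, Matrix.smul_mul, Matrix.one_mul]
  have hJT : ∀ μ X, J (μ, X) = T X - μ • Xhat := fun μ X => by rw [hJ, hT]
  have hker : LinearMap.ker J = Submodule.prod ⊥ (LinearMap.ker T) := by
    ext ⟨μ, X⟩
    rw [LinearMap.mem_ker, hJT, Submodule.mem_prod, Submodule.mem_bot, LinearMap.mem_ker]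
    constructor
    · intro h
      have hμ : μ = 0 := by
        by_contra hμ
        refine hXhat' ⟨μ⁻¹ • X, ?_⟩
        rw [map_smul, sub_eq_zero.1 h, inv_smul_smul₀ hμ]
      refine ⟨hμ, ?_⟩
      simpa [hμ] using h
    · rintro ⟨h1, h2⟩
      dsimp only at h1 h2
      simp [h1, h2]
  have hnull : Module.finrank ℂ (LinearMap.ker J) = m * k := by
    rw [hker, ← Submodule.map_inr, ← hkerT]
    exact (Submodule.equivMapOfInjective _ LinearMap.inr_injective _).finrank_eq.symm
  refine ⟨hker, hnull, ?_⟩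
  have hrn := J.finrank_range_add_finrank_ker
  rw [hnull, Module.finrank_prod, Module.finrank_self, Module.finrank_matrix] at hrn
  simp only [Fintype.card_fin, Module.finrank_self, mul_one] at hrn
  -- the subtraction in the rank formula is not truncated
  have hmn : m ≤ n := by
    rw [← hgeo]
    exact (Submodule.finrank_le _).trans (by simp)
  obtain ⟨d, rfl⟩ := Nat.exists_eq_add_of_le hmn
  rw [Nat.add_sub_cancel_left]
  rw [add_mul] at hrn
  omega
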